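/- Suppose y > 0, 0 ≤ α < 2π, and 0 < K < 1. Let P⁺ be the set of primes p such that cos(y·ln p + α) > K, and let P⁻ be the set of primes p such that cos(y·ln p + α) < -K. Then Σ_{p ∈ P⁺} 1/p = ∞ and Σ_{p ∈ P⁻} 1/p = ∞; that is, the function p ↦ 1/p is not summable over P⁺ and not summable over P⁻. -/

import Mathlib

/-!
Weight `n` by `(s - 1) Λ(n) / n ^ s` and let `s → 1⁺`. As `ζ` has a simple pole at `1` and no zero
on the line `re s = 1`, the weighted mean of `n ↦ n ^ (-it)` tends to `1` for `t = 0` and to `0`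
otherwise, so by Weyl's criterion `log n` is equidistributed modulo any `T > 0`. On the other hand,
the weighted mean of a bounded function `f` tends to `0` as soon as `∑ ‖f p‖ / p < ∞`, since
`∑ Λ(n) / n` converges over the non-primes and `(s - 1) log p ≤ p ^ (s - 1)` dominates the primes.
Taking for `f` a bump function of `log n` modulo `T` shows that `∑ 1 / p` diverges over the primes
whose logarithm lies in a prescribed nonempty open set modulo `T`.
-/

open ArithmeticFunction Filter MeasureTheory Topology

section VonMangoldtMean

/-- The weight of `n` in the mean of exponent `s` associated with the von Mangoldt function. For
`s > 1` these weights are nonnegative and summable, and their sum tends to `1` as `s → 1⁺`. -/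
noncomputable def vonMangoldtWeight (s : ℝ) (n : ℕ) : ℝ :=
  (s - 1) * (Λ n / (n : ℝ) ^ s)

/-- The weighted mean of `f` for the weights `vonMangoldtWeight s`. Its limit as `s → 1⁺` is a form
of asymptotic mean value of `f` along the prime powers. -/
noncomputable def vonMangoldtMean (s : ℝ) (f : ℕ → ℂ) : ℂ :=
  ∑' n, vonMangoldtWeight s n * f n

variable {f g : ℕ → ℂ} {s C D : ℝ} {n : ℕ}

lemma vonMangoldtWeight_nonneg (hs : 1 ≤ s) : 0 ≤ vonMangoldtWeight s n :=
  mul_nonneg (sub_nonneg.mpr hs) (div_nonneg vonMangoldt_nonneg (by positivity))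

lemma vonMangoldtWeight_mul_cpow (s t : ℝ) (n : ℕ) :
    vonMangoldtWeight s n * (n : ℂ) ^ (-(t * Complex.I)) =
      (s - 1) * LSeries.term (fun n ↦ (Λ n : ℂ)) (s + t * Complex.I) n := by
  rcases eq_or_ne n 0 with rfl | hn
  · simp [vonMangoldtWeight]
  · rw [LSeries.term_of_ne_zero hn, Complex.cpow_add _ _ (mod_cast hn), Complex.cpow_neg,
      vonMangoldtWeight]
    push_cast [Complex.ofReal_cpow n.cast_nonneg]
    ring

lemma summable_vonMangoldtWeight (hs : 1 < s) : Summable (vonMangoldtWeight s) := by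
  rw [← Complex.summable_ofReal]
  have hΛ := LSeriesSummable_vonMangoldt (s := s + (0 : ℝ) * Complex.I) (by simpa using hs)
  refine (hΛ.mul_left (s - 1 : ℂ)).congr fun n ↦ ?_
  simpa using (vonMangoldtWeight_mul_cpow s 0 n).symm

lemma norm_vonMangoldtWeight_mul_le {z : ℂ} (hs : 1 ≤ s) (hz : ‖z‖ ≤ C) :
    ‖vonMangoldtWeight s n * z‖ ≤ vonMangoldtWeight s n * C := by
  have hw := vonMangoldtWeight_nonneg (n := n) hs
  rw [norm_mul, Complex.norm_of_nonneg hw]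
  gcongr

lemma summable_vonMangoldtWeight_mul (hs : 1 < s) (hf : ∀ n, ‖f n‖ ≤ C) :
    Summable fun n ↦ vonMangoldtWeight s n * f n :=
  .of_norm_bounded ((summable_vonMangoldtWeight hs).mul_right C) fun n ↦
    norm_vonMangoldtWeight_mul_le hs.le (hf n)

lemma vonMangoldtMean_add (hs : 1 < s) (hf : ∀ n, ‖f n‖ ≤ C) (hg : ∀ n, ‖g n‖ ≤ D) :
    vonMangoldtMean s (fun n ↦ f n + g n) = vonMangoldtMean s f + vonMangoldtMean s g := by
  simp only [vonMangoldtMean, mul_add]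
  exact (summable_vonMangoldtWeight_mul hs hf).tsum_add (summable_vonMangoldtWeight_mul hs hg)

lemma vonMangoldtMean_const_mul (s : ℝ) (c : ℂ) (f : ℕ → ℂ) :
    vonMangoldtMean s (fun n ↦ c * f n) = c * vonMangoldtMean s f := by
  simp only [vonMangoldtMean, mul_left_comm _ c, tsum_mul_left]

lemma norm_vonMangoldtMean_le (hs : 1 < s) (hf : ∀ n, ‖f n‖ ≤ C) :
    ‖vonMangoldtMean s f‖ ≤ (∑' n, vonMangoldtWeight s n) * C := by
  rw [← tsum_mul_right]
  exact tsum_of_norm_bounded ((summable_vonMangoldtWeight hs).mul_right C).hasSum fun n ↦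
    norm_vonMangoldtWeight_mul_le hs.le (hf n)

lemma vonMangoldtMean_cpow (s t : ℝ) :
    vonMangoldtMean s (fun n ↦ (n : ℂ) ^ (-(t * Complex.I))) =
      (s - 1) * LSeries (fun n ↦ (Λ n : ℂ)) (s + t * Complex.I) := by
  simp only [vonMangoldtMean, vonMangoldtWeight_mul_cpow, tsum_mul_left, LSeries]

end VonMangoldtMean

section CharacterMeans

lemma residueClass_modOne : vonMangoldt.residueClass (1 : ZMod 1) = fun n ↦ Λ n :=
  Set.indicator_eq_self.mpr fun _ _ ↦ Subsingleton.elim (α := ZMod 1) _ _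

lemma exists_continuousOn_eqOn_LSeries_vonMangoldt_sub_pole :
    ∃ F : ℂ → ℂ, ContinuousOn F {z | 1 ≤ z.re} ∧
      Set.EqOn F (fun z ↦ LSeries (fun n ↦ (Λ n : ℂ)) z - 1 / (z - 1)) {z | 1 < z.re} := by
  refine ⟨_, vonMangoldt.continuousOn_LFunctionResidueClassAux (1 : ZMod 1), ?_⟩
  simpa [residueClass_modOne] using
    vonMangoldt.eqOn_LFunctionResidueClassAux (isUnit_one (M := ZMod 1))

lemma tendsto_ofReal_sub_one_nhdsGT_one : Tendsto (fun s : ℝ ↦ (s - 1 : ℂ)) (𝓝[>] 1) (𝓝 0) := by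
  have h : Continuous fun s : ℝ ↦ (s - 1 : ℂ) := by fun_prop
  simpa using (h.tendsto 1).mono_left nhdsWithin_le_nhds

lemma tendsto_ofReal_sub_one_div_nhdsGT_one (t : ℝ) :
    Tendsto (fun s : ℝ ↦ (s - 1 : ℂ) / (s + t * Complex.I - 1)) (𝓝[>] 1)
      (𝓝 (if t = 0 then 1 else 0)) := by
  split_ifs with ht
  · refine tendsto_const_nhds.congr' ?_
    filter_upwards [self_mem_nhdsWithin] with s (hs : 1 < s)
    have : (s - 1 : ℂ) ≠ 0 := sub_ne_zero.mpr (mod_cast hs.ne')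
    simp [ht, this]
  · have hden : Tendsto (fun s : ℝ ↦ (s + t * Complex.I - 1 : ℂ)) (𝓝[>] 1)
        (𝓝 (t * Complex.I)) := by
      simpa [add_sub_right_comm] using tendsto_ofReal_sub_one_nhdsGT_one.add_const (t * Complex.I)
    have hquot := tendsto_ofReal_sub_one_nhdsGT_one.div hden (by simp [ht])
    rwa [zero_div] at hquot

lemma tendsto_vonMangoldtMean_cpow (t : ℝ) :
    Tendsto (fun s ↦ vonMangoldtMean s fun n ↦ (n : ℂ) ^ (-(t * Complex.I))) (𝓝[>] 1)
      (𝓝 (if t = 0 then 1 else 0)) := by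
  obtain ⟨F, hFc, hF⟩ := exists_continuousOn_eqOn_LSeries_vonMangoldt_sub_pole
  have hline : Tendsto (fun s : ℝ ↦ (s + t * Complex.I : ℂ)) (𝓝[>] 1)
      (𝓝[{z | 1 ≤ z.re}] ((1 : ℝ) + t * Complex.I)) := by
    refine tendsto_nhdsWithin_iff.mpr ⟨?_, ?_⟩
    · exact (Continuous.tendsto (by fun_prop) 1).mono_left nhdsWithin_le_nhds
    · filter_upwards [self_mem_nhdsWithin] with s (hs : 1 < s)
      simpa using hs.le
  have hregular : Tendsto (fun s : ℝ ↦ (s - 1 : ℂ) * F (s + t * Complex.I)) (𝓝[>] 1) (𝓝 0) := by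
    simpa using tendsto_ofReal_sub_one_nhdsGT_one.mul ((hFc _ (by simp)).tendsto.comp hline)
  have hsum := hregular.add (tendsto_ofReal_sub_one_div_nhdsGT_one t)
  rw [zero_add] at hsum
  refine hsum.congr' ?_
  filter_upwards [self_mem_nhdsWithin] with s (hs : 1 < s)
  rw [vonMangoldtMean_cpow, hF (by simpa using hs)]
  ring

lemma tendsto_tsum_vonMangoldtWeight :
    Tendsto (fun s ↦ ∑' n, vonMangoldtWeight s n) (𝓝[>] 1) (𝓝 1) := by
  have h := tendsto_vonMangoldtMean_cpow 0
  simp only [vonMangoldtMean, Complex.ofReal_zero, zero_mul, neg_zero, Complex.cpow_zero, mul_one,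
    if_true, ← Complex.ofReal_tsum] at h
  exact tendsto_ofReal_iff.mp (by simpa using h)

end CharacterMeans

section Equidistribution

lemma tendsto_vonMangoldtMean_of_mem_span {X : Type*} [TopologicalSpace X] [CompactSpace X]
    [MeasurableSpace X] [OpensMeasurableSpace X] {μ : Measure X} [IsFiniteMeasure μ] {u : ℕ → X}
    {S : Set C(X, ℂ)}
    (hS : ∀ φ ∈ S, Tendsto (fun s ↦ vonMangoldtMean s fun n ↦ φ (u n)) (𝓝[>] 1) (𝓝 (∫ x, φ x ∂μ)))
    {φ : C(X, ℂ)} (hφ : φ ∈ Submodule.span ℂ S) :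
    Tendsto (fun s ↦ vonMangoldtMean s fun n ↦ φ (u n)) (𝓝[>] 1) (𝓝 (∫ x, φ x ∂μ)) := by
  induction hφ using Submodule.span_induction with
  | mem φ hφ => exact hS φ hφ
  | zero => simp [vonMangoldtMean]
  | add φ ψ _ _ hφ hψ =>
    simp only [ContinuousMap.add_apply]
    rw [integral_add (φ.continuous.integrable_of_hasCompactSupport (.of_compactSpace _))
      (ψ.continuous.integrable_of_hasCompactSupport (.of_compactSpace _))]
    refine (hφ.add hψ).congr' ?_
    filter_upwards [self_mem_nhdsWithin] with s hs
    exact (vonMangoldtMean_add hs (fun n ↦ φ.norm_coe_le_norm (u n))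
      fun n ↦ ψ.norm_coe_le_norm (u n)).symm
  | smul c φ _ hφ =>
    simpa only [ContinuousMap.smul_apply, smul_eq_mul, integral_const_mul,
      vonMangoldtMean_const_mul] using hφ.const_mul c

lemma tendsto_vonMangoldtMean_of_dense_span {X : Type*} [TopologicalSpace X] [CompactSpace X]
    [MeasurableSpace X] [OpensMeasurableSpace X] {μ : Measure X} [IsProbabilityMeasure μ]
    {u : ℕ → X} {S : Set C(X, ℂ)} (hdense : (Submodule.span ℂ S).topologicalClosure = ⊤)
    (hS : ∀ φ ∈ S, Tendsto (fun s ↦ vonMangoldtMean s fun n ↦ φ (u n)) (𝓝[>] 1) (𝓝 (∫ x, φ x ∂μ)))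
    (φ : C(X, ℂ)) :
    Tendsto (fun s ↦ vonMangoldtMean s fun n ↦ φ (u n)) (𝓝[>] 1) (𝓝 (∫ x, φ x ∂μ)) := by
  rw [Metric.tendsto_nhds]
  intro ε hε
  have hφ : φ ∈ closure (Submodule.span ℂ S : Set C(X, ℂ)) := by
    rw [← Submodule.topologicalClosure_coe, hdense]
    trivial
  obtain ⟨ψ, hψ, hφψ⟩ := Metric.mem_closure_iff.mp hφ (ε / 4) (by positivity)
  rw [dist_eq_norm] at hφψ
  have hdiff (x : X) : ‖φ x - ψ x‖ ≤ ε / 4 := ((φ - ψ).norm_coe_le_norm x).trans hφψ.le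
  have hintegral : dist (∫ x, ψ x ∂μ) (∫ x, φ x ∂μ) ≤ ε / 4 := by
    rw [dist_comm, dist_eq_norm,
      ← integral_sub (φ.continuous.integrable_of_hasCompactSupport (.of_compactSpace _))
        (ψ.continuous.integrable_of_hasCompactSupport (.of_compactSpace _))]
    simpa using norm_integral_le_of_norm_le_const (μ := μ) (.of_forall hdiff)
  filter_upwards [self_mem_nhdsWithin,
    tendsto_tsum_vonMangoldtWeight.eventually_lt_const one_lt_two,
    Metric.tendsto_nhds.mp (tendsto_vonMangoldtMean_of_mem_span hS hψ) (ε / 4) (by positivity)]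
    with s hs hweight hmeanψ
  have hmean : dist (vonMangoldtMean s fun n ↦ φ (u n)) (vonMangoldtMean s fun n ↦ ψ (u n)) ≤
      2 * (ε / 4) := by
    have hadd := vonMangoldtMean_add hs (fun n ↦ hdiff (u n)) fun n ↦ ψ.norm_coe_le_norm (u n)
    simp only [sub_add_cancel] at hadd
    rw [dist_eq_norm, hadd, add_sub_cancel_right]
    exact (norm_vonMangoldtMean_le hs fun n ↦ hdiff (u n)).trans (by gcongr)
  linarith [dist_triangle4 (vonMangoldtMean s fun n ↦ φ (u n))
    (vonMangoldtMean s fun n ↦ ψ (u n)) (∫ x, ψ x ∂μ) (∫ x, φ x ∂μ)]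

variable {T : ℝ}

lemma fourier_log_natCast (k : ℤ) {n : ℕ} (hn : n ≠ 0) :
    fourier k (Real.log n : AddCircle T) =
      (n : ℂ) ^ (-((-(2 * Real.pi * k / T) : ℝ) * Complex.I)) := by
  rw [fourier_coe_apply, Complex.cpow_def_of_ne_zero (mod_cast hn), Complex.natCast_log]
  congr 1
  push_cast
  ring

variable [hT : Fact (0 < T)]

lemma integral_fourier (k : ℤ) :
    ∫ x : AddCircle T, fourier k x ∂AddCircle.haarAddCircle = if k = 0 then 1 else 0 := by
  have h := congrFun (fourierCoeff_fourier (T := T) k) 0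
  simpa [fourierCoeff, Pi.single_apply, eq_comm] using h

lemma tendsto_vonMangoldtMean_fourier_log (k : ℤ) :
    Tendsto (fun s ↦ vonMangoldtMean s fun n ↦ fourier k (Real.log n : AddCircle T)) (𝓝[>] 1)
      (𝓝 (∫ x : AddCircle T, fourier k x ∂AddCircle.haarAddCircle)) := by
  have h := tendsto_vonMangoldtMean_cpow (-(2 * Real.pi * k / T))
  simp only [neg_eq_zero, div_eq_zero_iff, mul_eq_zero, OfNat.ofNat_ne_zero, Real.pi_ne_zero,
    Int.cast_eq_zero, hT.out.ne', false_or, or_false, ← integral_fourier (T := T)] at h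
  refine h.congr fun s ↦ tsum_congr fun n ↦ ?_
  beta_reduce
  rcases eq_or_ne n 0 with rfl | hn
  · simp [vonMangoldtWeight]
  · rw [fourier_log_natCast k hn]

theorem tendsto_vonMangoldtMean_comp_log (φ : C(AddCircle T, ℂ)) :
    Tendsto (fun s ↦ vonMangoldtMean s fun n ↦ φ (Real.log n : AddCircle T)) (𝓝[>] 1)
      (𝓝 (∫ x, φ x ∂AddCircle.haarAddCircle)) :=
  tendsto_vonMangoldtMean_of_dense_span span_fourier_closure_eq_top
    (Set.forall_mem_range.mpr tendsto_vonMangoldtMean_fourier_log) φ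

end Equidistribution

section Negligible

variable {s : ℝ} {n : ℕ}

lemma tendsto_vonMangoldtWeight (n : ℕ) :
    Tendsto (fun s ↦ vonMangoldtWeight s n) (𝓝[>] 1) (𝓝 0) := by
  rcases eq_or_ne n 0 with rfl | hn
  · simp [vonMangoldtWeight]
  have hn' : (n : ℝ) ≠ 0 := mod_cast hn
  have hcont : Continuous fun s ↦ vonMangoldtWeight s n := by
    unfold vonMangoldtWeight
    exact (continuous_id.sub continuous_const).mul <| continuous_const.div
      (continuous_const.rpow continuous_id fun _ ↦ .inl hn') fun s ↦ by positivity
  simpa [vonMangoldtWeight] using (hcont.tendsto 1).mono_left nhdsWithin_le_nhds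

lemma vonMangoldtWeight_le_div (hs : s ∈ Set.Ioc 1 2) : vonMangoldtWeight s n ≤ Λ n / n := by
  rcases eq_or_ne n 0 with rfl | hn
  · simp [vonMangoldtWeight]
  have hpow : (n : ℝ) ≤ (n : ℝ) ^ s :=
    Real.self_le_rpow_of_one_le (mod_cast Nat.one_le_iff_ne_zero.mpr hn) hs.1.le
  calc vonMangoldtWeight s n ≤ 1 * (Λ n / n) := by
        unfold vonMangoldtWeight
        gcongr
        linarith [hs.2]
    _ = Λ n / n := one_mul _

lemma vonMangoldtWeight_prime_le {p : ℕ} (hp : p.Prime) (hs : 1 < s) :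
    vonMangoldtWeight s p ≤ 1 / p := by
  have hp₀ : (0 : ℝ) < p := mod_cast hp.pos
  have hlog : Real.log p * (s - 1) ≤ (p : ℝ) ^ (s - 1) :=
    (le_div_iff₀ (sub_pos.mpr hs)).mp (Real.log_le_rpow_div hp₀.le (sub_pos.mpr hs))
  calc vonMangoldtWeight s p = Real.log p * (s - 1) / (p : ℝ) ^ s := by
        rw [vonMangoldtWeight, vonMangoldt_apply_prime hp]
        ring
    _ ≤ (p : ℝ) ^ (s - 1) / (p : ℝ) ^ s := by gcongr
    _ = 1 / p := by
        rw [Real.rpow_sub_one hp₀.ne']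
        field_simp

theorem tendsto_vonMangoldtMean_zero {f : ℕ → ℂ} {C : ℝ} (hC : ∀ n, ‖f n‖ ≤ C)
    (hf : Summable ({p : ℕ | p.Prime}.indicator fun p ↦ ‖f p‖ / p)) :
    Tendsto (fun s ↦ vonMangoldtMean s f) (𝓝[>] 1) (𝓝 0) := by
  have hpowers := vonMangoldt.summable_residueClass_non_primes_div (1 : ZMod 1)
  rw [residueClass_modOne] at hpowers
  have hterm (n : ℕ) : Tendsto (fun s ↦ vonMangoldtWeight s n * f n) (𝓝[>] 1) (𝓝 0) := by
    simpa using (tendsto_vonMangoldtWeight n).ofReal.mul_const (f n)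
  rw [← tsum_zero (α := ℂ) (β := ℕ)]
  refine tendsto_tsum_of_dominated_convergence ((hpowers.mul_right C).add hf) hterm ?_
  filter_upwards [Ioc_mem_nhdsGT one_lt_two] with s hs n
  by_cases hn : n.Prime
  · simp only [hn, if_true, zero_div, zero_mul, zero_add, Set.indicator, Set.mem_ofPred_eq]
    calc ‖vonMangoldtWeight s n * f n‖ ≤ vonMangoldtWeight s n * ‖f n‖ :=
          norm_vonMangoldtWeight_mul_le hs.1.le le_rfl
      _ ≤ 1 / n * ‖f n‖ := by
          gcongr
          exact vonMangoldtWeight_prime_le hn hs.1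
      _ = ‖f n‖ / n := by ring
  · simp only [hn, if_false, Set.indicator, Set.mem_ofPred_eq, add_zero]
    have hC₀ : 0 ≤ C := (norm_nonneg _).trans (hC n)
    calc ‖vonMangoldtWeight s n * f n‖ ≤ vonMangoldtWeight s n * C :=
          norm_vonMangoldtWeight_mul_le hs.1.le (hC n)
      _ ≤ Λ n / n * C := by
          gcongr
          exact vonMangoldtWeight_le_div hs

end Negligible

section PrimesInOpenSets

lemma exists_continuous_bump_integral_pos {X : Type*} [TopologicalSpace X] [CompactSpace X]
    [T2Space X] [MeasurableSpace X] [OpensMeasurableSpace X] (μ : Measure X)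
    [IsFiniteMeasureOnCompacts μ] [μ.IsOpenPosMeasure] {U : Set X} (hU : IsOpen U)
    (hne : U.Nonempty) :
    ∃ φ : C(X, ℝ), Set.EqOn φ 0 Uᶜ ∧ (∀ x, φ x ∈ Set.Icc (0 : ℝ) 1) ∧ 0 < ∫ x, φ x ∂μ := by
  obtain ⟨x, hx⟩ := hne
  obtain ⟨φ, hφ₀, hφ₁, hφ⟩ := exists_continuous_zero_one_of_isClosed hU.isClosed_compl
    (isClosed_singleton (x := x)) (by simpa using hx)
  have hφx : φ x ≠ 0 := by simp [hφ₁ (Set.mem_singleton x)]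
  exact ⟨φ, hφ₀, hφ, φ.continuous.integral_pos_of_hasCompactSupport_nonneg_nonzero
    (.of_compactSpace _) (fun y ↦ (hφ y).1) hφx⟩

theorem not_summable_one_div_primes_log_mem {T : ℝ} [Fact (0 < T)] {U : Set (AddCircle T)}
    (hU : IsOpen U) (hne : U.Nonempty) :
    ¬ Summable fun p : {p : ℕ // p.Prime ∧ (Real.log p : AddCircle T) ∈ U} ↦
      (1 : ℝ) / (p : ℕ) := by
  intro hsum
  replace hsum : Summable ({p : ℕ | p.Prime ∧ (Real.log p : AddCircle T) ∈ U}.indicator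
      fun p ↦ (1 : ℝ) / p) := summable_subtype_iff_indicator.mp hsum
  obtain ⟨φ, hφU, hφ, hpos⟩ :=
    exists_continuous_bump_integral_pos AddCircle.haarAddCircle hU hne
  let φ' : C(AddCircle T, ℂ) := ⟨fun x ↦ φ x, by fun_prop⟩
  have hnorm (x : AddCircle T) : ‖φ' x‖ = φ x := Complex.norm_of_nonneg (hφ x).1
  have hprimes : Summable ({p : ℕ | p.Prime}.indicator
      fun p ↦ ‖φ' (Real.log p : AddCircle T)‖ / p) := by
    refine hsum.of_nonneg_of_le (Set.indicator_nonneg fun _ _ ↦ by positivity) fun p ↦ ?_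
    by_cases hp : p.Prime ∧ (Real.log p : AddCircle T) ∈ U
    · simp only [Set.indicator, Set.mem_ofPred_eq, hp, and_self, if_true, hnorm]
      gcongr
      exact (hφ _).2
    · have hφ₀ : p.Prime → φ (Real.log p : AddCircle T) = 0 := fun hprime ↦
        hφU fun hmem ↦ hp ⟨hprime, hmem⟩
      simp +contextual [Set.indicator, hp, hnorm, hφ₀]
  have hzero := tendsto_vonMangoldtMean_zero (fun n ↦ (hnorm _).trans_le (hφ _).2) hprimes
  have hintegral := tendsto_nhds_unique (tendsto_vonMangoldtMean_comp_log φ') hzero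
  have hofReal : ∫ x, φ' x ∂AddCircle.haarAddCircle =
      ((∫ x, φ x ∂AddCircle.haarAddCircle : ℝ) : ℂ) := integral_ofReal
  exact hpos.ne' (Complex.ofReal_eq_zero.mp (hofReal.symm.trans hintegral))

theorem not_summable_one_div_primes_of_periodic {X : Type*} [TopologicalSpace X] {g : ℝ → X}
    {T : ℝ} (hT : T ≠ 0) (hper : Function.Periodic g T) (hg : Continuous g) {U : Set X}
    (hU : IsOpen U) {x : ℝ} (hx : g x ∈ U) :
    ¬ Summable fun p : {p : ℕ // p.Prime ∧ g (Real.log p) ∈ U} ↦ (1 : ℝ) / (p : ℕ) := by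
  wlog hpos : 0 < T generalizing T
  · exact this (neg_ne_zero.mpr hT) hper.neg (neg_pos.mpr (lt_of_le_of_ne (not_lt.mp hpos) hT))
  have : Fact (0 < T) := ⟨hpos⟩
  have hlift : Continuous (hper.lift : AddCircle T → X) := continuous_quot_lift _ hg
  exact not_summable_one_div_primes_log_mem (hU.preimage hlift) ⟨(x : AddCircle T), hx⟩

end PrimesInOpenSets

theorem not_summable_one_div_primes_cos_general (y α K : ℝ) (hy : y ≠ 0) (hK : K < 1) :
    (¬ Summable fun p : {p : ℕ // p.Prime ∧ K < Real.cos (y * Real.log p + α)} =>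
        (1 : ℝ) / (p : ℕ)) ∧
    (¬ Summable fun p : {p : ℕ // p.Prime ∧ Real.cos (y * Real.log p + α) < -K} =>
        (1 : ℝ) / (p : ℕ)) := by
  have hT : y⁻¹ * (2 * Real.pi) ≠ 0 := mul_ne_zero (inv_ne_zero hy) Real.two_pi_pos.ne'
  have hper : Function.Periodic (fun u ↦ Real.cos (y * u + α)) (y⁻¹ * (2 * Real.pi)) :=
    (Real.cos_periodic.add_const α).const_mul y
  have hcont : Continuous fun u ↦ Real.cos (y * u + α) := by fun_prop
  have hval (θ : ℝ) : Real.cos (y * ((θ - α) / y) + α) = Real.cos θ := by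
    rw [mul_div_cancel₀ _ hy, sub_add_cancel]
  constructor
  · refine not_summable_one_div_primes_of_periodic (U := Set.Ioi K) (x := (0 - α) / y)
      hT hper hcont isOpen_Ioi ?_
    simpa only [hval, Real.cos_zero, Set.mem_Ioi] using hK
  · refine not_summable_one_div_primes_of_periodic (U := Set.Iio (-K)) (x := (Real.pi - α) / y)
      hT hper hcont isOpen_Iio ?_
    simpa only [hval, Real.cos_pi, Set.mem_Iio, neg_lt_neg_iff] using hK

/-- For `y > 0`, `0 ≤ α < 2π`, `0 < K < 1`, the sum of `1/p` over the primes with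
`cos (y ln p + α) > K` diverges, and so does the sum over the primes with
`cos (y ln p + α) < -K`. -/
theorem not_summable_one_div_primes_cos (y α K : ℝ) (hy : 0 < y)
    (hα₀ : 0 ≤ α) (hα₁ : α < 2 * Real.pi) (hK₀ : 0 < K) (hK₁ : K < 1) :
    (¬ Summable fun p : {p : ℕ // p.Prime ∧ K < Real.cos (y * Real.log p + α)} =>
        (1 : ℝ) / (p : ℕ)) ∧
    (¬ Summable fun p : {p : ℕ // p.Prime ∧ Real.cos (y * Real.log p + α) < -K} =>
        (1 : ℝ) / (p : ℕ)) :=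
  not_summable_one_div_primes_cos_general y α K hy.ne' hK₁
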